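/- Let T* and x* be real numbers and define u(x, t) = (T* − t)^{1/2} · W̄((x − x*)·(T* − t)^{−3/2}) for all x ∈ ℝ and t < T*. Then u solves the inviscid Burgers equation: at every point (x, t) with t < T*, ∂ₜu(x, t) + u(x, t)·∂ₓu(x, t) = 0. -/

import Mathlib

/-!
Cardano's formula exhibits `W̄(y)` as the root of `w³ + w + y = 0`. Multiplying this equation by
`(T∗ - t)^{3/2}` shows that `u` satisfies `u³ + (T∗ - t) u + (x - x∗) = 0`, that is
`x = t u + f(u)` with `f(v) = x∗ - T∗ v - v³`: the level sets of `u` are lines of slope `dx/dt = u`,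
which are the characteristics of Burgers' equation.
-/

/-- The stable self-similar Burgers profile `W̄`. -/
noncomputable def Wbar (y : ℝ) : ℝ :=
  (-y / 2 + Real.sqrt (1 / 27 + y ^ 2 / 4)) ^ ((1 : ℝ) / 3) -
  (y / 2 + Real.sqrt (1 / 27 + y ^ 2 / 4)) ^ ((1 : ℝ) / 3)

open Filter Topology

/-- Cardano's expression for a real root of the depressed cubic `w³ + 3pw + 2q`. For `0 ≤ p` both
radicands are nonnegative, so that `Real.rpow` computes the real cube roots. -/
noncomputable def cardanoRoot (p q : ℝ) : ℝ :=
  (-q + √(p ^ 3 + q ^ 2)) ^ (3⁻¹ : ℝ) - (q + √(p ^ 3 + q ^ 2)) ^ (3⁻¹ : ℝ)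

theorem cardanoRoot_cubic {p : ℝ} (hp : 0 ≤ p) (q : ℝ) :
    cardanoRoot p q ^ 3 + 3 * p * cardanoRoot p q + 2 * q = 0 := by
  have hq : |q| ≤ √(p ^ 3 + q ^ 2) := Real.abs_le_sqrt (le_add_of_nonneg_left (by positivity))
  have hsq : √(p ^ 3 + q ^ 2) ^ 2 = p ^ 3 + q ^ 2 := Real.sq_sqrt (by positivity)
  unfold cardanoRoot
  set r := √(p ^ 3 + q ^ 2)
  have ha : 0 ≤ -q + r := by linarith [le_abs_self q]
  have hb : 0 ≤ q + r := by linarith [neg_abs_le q]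
  have ha_cube : ((-q + r) ^ (3⁻¹ : ℝ)) ^ 3 = -q + r :=
    Real.rpow_inv_natCast_pow ha three_ne_zero
  have hb_cube : ((q + r) ^ (3⁻¹ : ℝ)) ^ 3 = q + r :=
    Real.rpow_inv_natCast_pow hb three_ne_zero
  have hab : (-q + r) ^ (3⁻¹ : ℝ) * (q + r) ^ (3⁻¹ : ℝ) = p :=
    calc (-q + r) ^ (3⁻¹ : ℝ) * (q + r) ^ (3⁻¹ : ℝ)
      _ = ((-q + r) * (q + r)) ^ (3⁻¹ : ℝ) := (Real.mul_rpow ha hb).symm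
      _ = (p ^ 3) ^ (3⁻¹ : ℝ) := by congr 1; linear_combination hsq
      _ = p := Real.pow_rpow_inv_natCast hp three_ne_zero
  linear_combination ha_cube - hb_cube -
    3 * ((-q + r) ^ (3⁻¹ : ℝ) - (q + r) ^ (3⁻¹ : ℝ)) * hab

theorem differentiable_cardanoRoot {p : ℝ} (hp : 0 < p) : Differentiable ℝ (cardanoRoot p) := by
  intro q
  have hq : |q| < √(p ^ 3 + q ^ 2) :=
    Real.lt_sqrt_of_sq_lt (by rw [sq_abs]; exact lt_add_of_pos_left _ (by positivity))
  have ha : -q + √(p ^ 3 + q ^ 2) ≠ 0 := by linarith [le_abs_self q]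
  have hb : q + √(p ^ 3 + q ^ 2) ≠ 0 := by linarith [neg_abs_le q]
  have hr : p ^ 3 + q ^ 2 ≠ 0 := by positivity
  unfold cardanoRoot
  fun_prop (disch := assumption)

theorem Wbar_eq_cardanoRoot (y : ℝ) : Wbar y = cardanoRoot (1 / 3) (y / 2) := by
  unfold Wbar cardanoRoot
  ring_nf

theorem Wbar_cubic (y : ℝ) : Wbar y ^ 3 + Wbar y + y = 0 := by
  rw [Wbar_eq_cardanoRoot]
  linear_combination cardanoRoot_cubic (p := 1 / 3) (by norm_num) (y / 2)

theorem differentiable_Wbar : Differentiable ℝ Wbar := by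
  rw [funext Wbar_eq_cardanoRoot]
  exact (differentiable_cardanoRoot (by norm_num)).comp (by fun_prop)

/-- The self-similar rescaling `s^{1/2} W̄(z s^{-3/2})` of the profile, where `s` stands for the
time `T∗ - t` left before blowup and `z` for the displacement `x - x∗` from the blowup point. -/
noncomputable def rescaledWbar (s z : ℝ) : ℝ :=
  s ^ ((1 : ℝ) / 2) * Wbar (z * s ^ (-(3 : ℝ) / 2))

theorem rescaledWbar_cubic {s : ℝ} (hs : 0 < s) (z : ℝ) :
    rescaledWbar s z ^ 3 + s * rescaledWbar s z + z = 0 := by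
  have h_sq : (s ^ ((1 : ℝ) / 2)) ^ 2 = s := by
    rw [← Real.sqrt_eq_rpow, Real.sq_sqrt hs.le]
  have h_cube : (s ^ ((1 : ℝ) / 2)) ^ 3 * s ^ (-(3 : ℝ) / 2) = 1 := by
    rw [← Real.rpow_mul_natCast hs.le, ← Real.rpow_add hs]
    norm_num
  unfold rescaledWbar
  set w := Wbar (z * s ^ (-(3 : ℝ) / 2))
  have hw : w ^ 3 + w + z * s ^ (-(3 : ℝ) / 2) = 0 := Wbar_cubic _
  linear_combination (s ^ ((1 : ℝ) / 2)) ^ 3 * hw - z * h_cube - s ^ ((1 : ℝ) / 2) * w * h_sq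

theorem differentiableAt_rescaledWbar {s : ℝ} (hs : 0 < s) (z : ℝ) :
    DifferentiableAt ℝ (fun a : ℝ × ℝ => rescaledWbar a.1 a.2) (s, z) := by
  have hs' : s ≠ 0 := hs.ne'
  have hW := differentiable_Wbar
  unfold rescaledWbar
  fun_prop (disch := assumption)

/-- Differentiating `x = t u + f(u)` in `x` and in `t` gives `(t + f'(u)) uₓ = 1` and
`(t + f'(u)) uₜ = -u`; eliminating `t + f'(u)` leaves `uₜ = -u uₓ`. -/
theorem burgers_of_eventually_eq_characteristic {u : ℝ → ℝ → ℝ} {f : ℝ → ℝ} {x t : ℝ}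
    (hux : DifferentiableAt ℝ (fun x' => u x' t) x)
    (hut : DifferentiableAt ℝ (fun t' => u x t') t)
    (hf : DifferentiableAt ℝ f (u x t))
    (hx : ∀ᶠ x' in 𝓝 x, x' = t * u x' t + f (u x' t))
    (ht : ∀ᶠ t' in 𝓝 t, x = t' * u x t' + f (u x t')) :
    deriv (fun t' => u x t') t + u x t * deriv (fun x' => u x' t) x = 0 := by
  set ux := deriv (fun x' => u x' t) x
  set ut := deriv (fun t' => u x t') t
  set f' := deriv f (u x t)
  have hx_deriv : 1 = t * ux + f' * ux :=
    (hasDerivAt_id x).unique <|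
      ((hux.hasDerivAt.const_mul t).add
        (hf.hasDerivAt.comp x hux.hasDerivAt)).congr_of_eventuallyEq hx
  have ht_deriv : 0 = 1 * u x t + t * ut + f' * ut :=
    (hasDerivAt_const t x).unique <|
      (((hasDerivAt_id t).mul hut.hasDerivAt).add
        (hf.hasDerivAt.comp t hut.hasDerivAt)).congr_of_eventuallyEq ht
  linear_combination ut * hx_deriv - ux * ht_deriv

/-- The self-similar function `u(x,t) = (T∗ − t)^{1/2} W̄((x − x∗)(T∗ − t)^{−3/2})` solves the
inviscid Burgers equation `∂ₜu + u ∂ₓu = 0` for `t < T∗`. -/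
theorem selfSimilar_solves_burgers (Tstar xstar : ℝ) (u : ℝ → ℝ → ℝ)
    (hu : ∀ x t : ℝ, t < Tstar →
      u x t = (Tstar - t) ^ ((1 : ℝ) / 2) * Wbar ((x - xstar) * (Tstar - t) ^ (-(3 : ℝ) / 2))) :
    ∀ x t : ℝ, t < Tstar →
      deriv (fun t' => u x t') t + u x t * deriv (fun x' => u x' t) x = 0 := by
  intro x t ht
  have hu' : ∀ x' t', t' < Tstar → u x' t' = rescaledWbar (Tstar - t') (x' - xstar) := hu
  have characteristic : ∀ x' t', t' < Tstar →
      x' = t' * u x' t' + (xstar - Tstar * u x' t' - u x' t' ^ 3) := by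
    intro x' t' ht'
    rw [hu' x' t' ht']
    linear_combination rescaledWbar_cubic (sub_pos.2 ht') (x' - xstar)
  have ht_near : ∀ᶠ t' in 𝓝 t, t' < Tstar := eventually_lt_nhds ht
  have hW := differentiableAt_rescaledWbar (sub_pos.2 ht) (x - xstar)
  have hux : DifferentiableAt ℝ (fun x' => u x' t) x := by
    rw [funext fun x' => hu' x' t ht]
    exact hW.comp x (f := fun x' => (Tstar - t, x' - xstar)) (by fun_prop)
  have hut : DifferentiableAt ℝ (fun t' => u x t') t :=
    (hW.comp t (f := fun t' => (Tstar - t', x - xstar)) (by fun_prop)).congr_of_eventuallyEq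
      (ht_near.mono (hu' x))
  exact burgers_of_eventually_eq_characteristic (f := fun v => xstar - Tstar * v - v ^ 3) hux hut
    (by fun_prop) (.of_forall fun x' => characteristic x' t ht) (ht_near.mono (characteristic x))
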